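/- arXiv:1903.07228 — 2 statements merged into one kernel-verified Lean document; each statement's English description precedes it below -/
import Mathlib

section
/- Ultimate boundedness of the time-scaled QSA process (Proposition 6). Suppose Assumptions (A2)–(A5) hold and sup_{t≥0} ‖f(0, ξ(t))‖ < ∞. Then there exists b < ∞ such that every time-scaled QSA process θ̂, for every initial condition θ̂(0), satisfies limsup_{u→∞} ‖θ̂(u)‖ ≤ b. -/
open intervalIntegral Filter

/-!
Over a window of length `T` in rescaled time, the averaged flow started at `x` stays within
`O(T (exp (K T) - 1) (1 + ‖x‖))` of the Euler step `x + T • f̄ x`. So does the QSA process, up to a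
further averaging error: in the original time `t` its velocity is `a t • f (θ, ξ t)`, and since `a`
is nonincreasing, Bonnet's second mean value estimate bounds `∫ a • (f (x, ξ) - f̄ x)` by `a t₀`
times the uniform bound `2 b₀ (1 + ‖x‖)` that (A3) gives for `∫ (f (x, ξ) - f̄ x)`. For `T` small
and `t₀` large, both errors are absorbed in the drift `-T ‖x‖` of (A2), so that `V` decreases by at
least `T / 2 * ‖x‖` over each window that starts outside a fixed ball. A Foster–Lyapunov argument
bounds the process at the endpoints of the windows, and Grönwall's inequality bounds it in between.
-/

open Set MeasureTheory Topology
open scoped NNReal BoundedContinuousFunction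

theorem norm_le_mul_one_add_of_lipschitzWith {E E' : Type*} [SeminormedAddCommGroup E]
    [SeminormedAddCommGroup E'] {F : E → E'} {K : ℝ≥0} (hF : LipschitzWith K F) (h0 : ‖F 0‖ ≤ K)
    (x : E) : ‖F x‖ ≤ K * (1 + ‖x‖) := by
  have h := hF.norm_sub_le x 0
  rw [sub_zero] at h
  linarith [norm_le_norm_add_norm_sub' (F x) (F 0)]

theorem exists_Ioo_subset_subset_Ioc_of_lower {α : Type*} [ConditionallyCompleteLinearOrder α]
    {A : Set α} {s t : α} (hst : s ≤ t) (hA : A ⊆ Ioc s t) (hlow : ∀ r ∈ A, Ioc s r ⊆ A) :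
    ∃ ρ ∈ Icc s t, Ioo s ρ ⊆ A ∧ A ⊆ Ioc s ρ := by
  have hub : t ∈ upperBounds (insert s A) := by
    rintro r (rfl | hr)
    exacts [hst, (hA hr).2]
  have hbdd : BddAbove (insert s A) := ⟨t, hub⟩
  refine ⟨sSup (insert s A), ⟨le_csSup hbdd (mem_insert s A), csSup_le (insert_nonempty s A) hub⟩,
    fun r hr ↦ ?_, fun r hr ↦ ⟨(hA hr).1, le_csSup hbdd (mem_insert_of_mem s hr)⟩⟩
  obtain ⟨q, rfl | hq, hrq⟩ := exists_lt_of_lt_csSup (insert_nonempty s A) hr.2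
  exacts [absurd hrq hr.1.not_gt, hlow q hq ⟨hr.1, hrq.le⟩]

section

variable {E : Type*} [NormedAddCommGroup E] [NormedSpace ℝ E]

/-! ### Global flow of a Lipschitz field -/

theorem norm_integral_le_of_norm_le_exp {h : ℝ → E} {c l : ℝ} (hl : 0 < l)
    (hh : ∀ s, ‖h s‖ ≤ c * Real.exp (l * |s|)) (t : ℝ) :
    ‖∫ s in (0 : ℝ)..t, h s‖ ≤ c / l * Real.exp (l * |t|) := by
  wlog ht : 0 ≤ t generalizing h t
  · have := this (h := fun s ↦ h (-s)) (fun s ↦ by simpa using hh (-s)) (-t) (by linarith)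
    rwa [intervalIntegral.integral_comp_neg, neg_neg, neg_zero, intervalIntegral.integral_symm,
      norm_neg, abs_neg] at this
  have hc : 0 ≤ c := by simpa using (norm_nonneg _).trans (hh 0)
  calc ‖∫ s in (0 : ℝ)..t, h s‖
      ≤ ∫ s in (0 : ℝ)..t, c * Real.exp (l * s) :=
        intervalIntegral.norm_integral_le_of_norm_le ht
          (.of_forall fun s hs ↦ by simpa [abs_of_pos hs.1] using hh s)
          (Continuous.intervalIntegrable (by fun_prop) _ _)
    _ = c / l * (Real.exp (l * t) - 1) := by
        rw [intervalIntegral.integral_const_mul,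
          intervalIntegral.integral_comp_mul_left (fun x ↦ Real.exp x) hl.ne']
        simp [div_eq_mul_inv, mul_assoc]
    _ ≤ c / l * Real.exp (l * |t|) := by
        rw [abs_of_nonneg ht]
        gcongr
        linarith

/-- The Picard operator of `χ' = F χ`, `χ 0 = x₀`, on curves `χ t = exp (l * |t|) • y t`, written in
terms of `y`. The weight (Bielecki's trick) makes it a contraction for the sup norm of `y` on all of
`ℝ` once `l` exceeds the Lipschitz constant of `F`, so that solutions are global in time. -/
noncomputable def weightedPicard (F : E → E) (x₀ : E) (l : ℝ) (y : ℝ → E) (t : ℝ) : E :=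
  Real.exp (-(l * |t|)) • ODE.picard (fun _ ↦ F) 0 x₀ (fun s ↦ Real.exp (l * |s|) • y s) t

variable {F : E → E} {K : ℝ≥0} {l : ℝ}

theorem continuous_comp_weighted (hF : Continuous F) (y : ℝ →ᵇ E) :
    Continuous fun s ↦ F (Real.exp (l * |s|) • y s) := by
  have := y.continuous
  fun_prop

theorem continuous_weightedPicard (hF : Continuous F) (x₀ : E) (y : ℝ →ᵇ E) :
    Continuous (weightedPicard F x₀ l y) := by
  have : Continuous fun t ↦ ∫ s in (0 : ℝ)..t, F (Real.exp (l * |s|) • y s) :=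
    intervalIntegral.continuous_primitive
      (fun _ _ ↦ (continuous_comp_weighted hF y).intervalIntegrable _ _) 0
  unfold weightedPicard ODE.picard
  fun_prop

theorem norm_weightedPicard_le (hF : LipschitzWith K F) (hl : 0 < l) (x₀ : E) (y : ℝ →ᵇ E)
    (t : ℝ) : ‖weightedPicard F x₀ l y t‖ ≤ ‖x₀‖ + (‖F 0‖ + K * ‖y‖) / l := by
  have hgrowth : ∀ s, ‖F (Real.exp (l * |s|) • y s)‖ ≤
      (‖F 0‖ + K * ‖y‖) * Real.exp (l * |s|) := fun s ↦ by
    have h1 : 1 ≤ Real.exp (l * |s|) := Real.one_le_exp (by positivity)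
    calc ‖F (Real.exp (l * |s|) • y s)‖
        ≤ ‖F 0‖ + ‖F (Real.exp (l * |s|) • y s) - F 0‖ := norm_le_norm_add_norm_sub' _ _
      _ ≤ ‖F 0‖ * Real.exp (l * |s|) + K * (Real.exp (l * |s|) * ‖y‖) := by
        refine add_le_add (le_mul_of_one_le_right (norm_nonneg _) h1)
          ((hF.norm_sub_le _ _).trans ?_)
        rw [sub_zero, norm_smul, Real.norm_of_nonneg (Real.exp_pos _).le]
        gcongr
        exact y.norm_coe_le_norm s
      _ = (‖F 0‖ + K * ‖y‖) * Real.exp (l * |s|) := by ring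
  have h1 : Real.exp (-(l * |t|)) ≤ 1 := Real.exp_le_one_iff.2 (neg_nonpos.2 (by positivity))
  rw [weightedPicard, ODE.picard_apply, norm_smul, Real.norm_of_nonneg (Real.exp_pos _).le]
  calc Real.exp (-(l * |t|)) * ‖x₀ + ∫ s in (0 : ℝ)..t, F (Real.exp (l * |s|) • y s)‖
      ≤ Real.exp (-(l * |t|)) * (‖x₀‖ + (‖F 0‖ + K * ‖y‖) / l * Real.exp (l * |t|)) := by
        gcongr
        exact (norm_add_le _ _).trans
          (add_le_add_right (norm_integral_le_of_norm_le_exp hl hgrowth t) _)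
    _ = Real.exp (-(l * |t|)) * ‖x₀‖ + (‖F 0‖ + K * ‖y‖) / l := by
        rw [Real.exp_neg]
        field_simp
    _ ≤ ‖x₀‖ + (‖F 0‖ + K * ‖y‖) / l := by
        gcongr
        exact mul_le_of_le_one_left (norm_nonneg _) h1

theorem dist_weightedPicard_le (hF : LipschitzWith K F) (hl : 0 < l) (x₀ : E) (y z : ℝ →ᵇ E)
    (t : ℝ) :
    dist (weightedPicard F x₀ l y t) (weightedPicard F x₀ l z t) ≤ K / l * dist y z := by
  have hdiff : ∀ s, ‖F (Real.exp (l * |s|) • y s) - F (Real.exp (l * |s|) • z s)‖ ≤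
      K * dist y z * Real.exp (l * |s|) := fun s ↦ by
    refine (hF.norm_sub_le _ _).trans ?_
    rw [← smul_sub, norm_smul, Real.norm_of_nonneg (Real.exp_pos _).le, ← dist_eq_norm,
      mul_right_comm, mul_assoc]
    gcongr
    exact BoundedContinuousFunction.dist_coe_le_dist s
  have hi (w : ℝ →ᵇ E) : IntervalIntegrable (fun s ↦ F (Real.exp (l * |s|) • w s)) volume 0 t :=
    (continuous_comp_weighted hF.continuous w).intervalIntegrable _ _
  rw [dist_eq_norm, weightedPicard, weightedPicard, ← smul_sub, norm_smul,
    Real.norm_of_nonneg (Real.exp_pos _).le, ODE.picard_apply, ODE.picard_apply,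
    add_sub_add_left_eq_sub, ← intervalIntegral.integral_sub (hi y) (hi z)]
  calc _ ≤ Real.exp (-(l * |t|)) * (K * dist y z / l * Real.exp (l * |t|)) := by
        gcongr
        exact norm_integral_le_of_norm_le_exp hl hdiff t
    _ = K / l * dist y z := by
        rw [Real.exp_neg]
        field_simp

theorem exists_weightedPicard_eq_self [CompleteSpace E] (hF : LipschitzWith K F) (hKl : K < l)
    (x₀ : E) : ∃ y : ℝ →ᵇ E, weightedPicard F x₀ l y = y := by
  have hl : 0 < l := K.coe_nonneg.trans_lt hKl
  let Φ : (ℝ →ᵇ E) → (ℝ →ᵇ E) := fun y ↦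
    .ofNormedAddCommGroup (weightedPicard F x₀ l y) (continuous_weightedPicard hF.continuous x₀ y) _
      (norm_weightedPicard_le hF hl x₀ y)
  have hΦ : ContractingWith (K / l.toNNReal) Φ := by
    refine ⟨(div_lt_one (by simpa)).2 (Real.lt_toNNReal_iff_coe_lt.2 hKl),
      .of_dist_le_mul fun y z ↦ (BoundedContinuousFunction.dist_le (by positivity)).2 fun t ↦ ?_⟩
    rw [NNReal.coe_div, Real.coe_toNNReal _ hl.le]
    exact dist_weightedPicard_le hF hl x₀ y z t
  exact ⟨hΦ.fixedPoint, congrArg DFunLike.coe hΦ.fixedPoint_isFixedPt⟩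

theorem exists_forall_hasDerivAt_of_lipschitzWith [CompleteSpace E] (hF : LipschitzWith K F)
    (x₀ : E) : ∃ χ : ℝ → E, χ 0 = x₀ ∧ ∀ t, HasDerivAt χ (F (χ t)) t := by
  obtain ⟨y, hy⟩ := exists_weightedPicard_eq_self hF (lt_add_one (K : ℝ)) x₀
  set χ : ℝ → E := fun s ↦ Real.exp ((K + 1) * |s|) • y s
  have hχ : χ = fun t ↦ x₀ + ∫ s in (0 : ℝ)..t, F (χ s) := by
    funext t
    change Real.exp _ • y t = _
    rw [← hy, weightedPicard, smul_smul, ← Real.exp_add, add_neg_cancel, Real.exp_zero, one_smul,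
      ODE.picard_apply]
  refine ⟨χ, by rw [hχ]; simp, fun t ↦ ?_⟩
  have hcont : Continuous fun s ↦ F (χ s) := continuous_comp_weighted hF.continuous y
  have h := (hcont.integral_hasStrictDerivAt 0 t).hasDerivAt.const_add x₀
  rwa [← hχ] at h

/-! ### Growth and averaging along a curve -/

theorem norm_sub_le_of_norm_deriv_le_one_add {y y' : ℝ → E} {K s t : ℝ} (hst : s ≤ t)
    (hy : ∀ r ∈ Icc s t, HasDerivWithinAt y (y' r) (Icc s t) r)
    (hy' : ∀ r ∈ Ico s t, ‖y' r‖ ≤ K * (1 + ‖y r‖)) (hK : 0 ≤ K) :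
    ‖y t - y s‖ ≤ (1 + ‖y s‖) * (Real.exp (K * (t - s)) - 1) := by
  have hbound : ∀ r ∈ Ico s t, ‖y' r‖ ≤ K * ‖y r - y s‖ + K * (1 + ‖y s‖) := fun r hr ↦ by
    refine (hy' r hr).trans ?_
    rw [← mul_add]
    exact mul_le_mul_of_nonneg_left (by linarith [norm_le_norm_add_norm_sub' (y r) (y s)]) hK
  have h := norm_le_gronwallBound_of_norm_deriv_right_le (f := fun r ↦ y r - y s) (δ := 0)
    (fun r hr ↦ ((hy r hr).sub_const _).continuousWithinAt)
    (fun r hr ↦ ((hy r (Ico_subset_Icc_self hr)).sub_const _).mono_of_mem_nhdsWithin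
      (Icc_mem_nhdsGE_of_mem hr)) (by simp) hbound t ⟨hst, le_rfl⟩
  refine h.trans_eq ?_
  rcases eq_or_ne K 0 with rfl | hK
  · simp [gronwallBound_K0]
  · simp [gronwallBound_of_K_ne_0 hK, mul_div_cancel_left₀ _ hK]

theorem norm_setIntegral_superlevel_le_of_antitoneOn {a : ℝ → ℝ} {h : ℝ → E} {s t B : ℝ}
    (hst : s ≤ t) (ha : AntitoneOn a (Icc s t))
    (hB : ∀ r ∈ Icc s t, ‖∫ x in s..r, h x‖ ≤ B) (c : ℝ) :
    ‖∫ r in Ioc s t ∩ {r | c < a r}, h r‖ ≤ B := by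
  obtain ⟨ρ, hρ, hIoo, hIoc⟩ := exists_Ioo_subset_subset_Ioc_of_lower
    (A := Ioc s t ∩ {r | c < a r}) hst inter_subset_left fun r hr q hq ↦
      have hqt : q ≤ t := hq.2.trans hr.1.2
      ⟨⟨hq.1, hqt⟩, hr.2.trans_le (ha ⟨hq.1.le, hqt⟩ ⟨hr.1.1.le, hr.1.2⟩ hq.2)⟩
  have hae : (Ioc s t ∩ {r | c < a r} : Set ℝ) =ᵐ[volume] Ioc s ρ :=
    hIoc.eventuallyLE.antisymm (Ioo_ae_eq_Ioc.symm.le.trans hIoo.eventuallyLE)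
  rw [setIntegral_congr_set hae, ← intervalIntegral.integral_of_le hρ.1]
  exact hB ρ hρ

/-- Bonnet's second mean value estimate. By the layer-cake formula `a r = ∫₀^{a s} 𝟙[c < a r] dc`,
the integral is an average over `c` of integrals of `h` over superlevel sets of `a`, which are
initial intervals because `a` is antitone. -/
theorem norm_integral_smul_le_of_antitoneOn [CompleteSpace E] {a : ℝ → ℝ} {h : ℝ → E} {s t B : ℝ}
    (hst : s ≤ t) (ha : AntitoneOn a (Icc s t)) (ha0 : 0 ≤ a t)
    (hh : IntervalIntegrable h volume s t) (hB : ∀ r ∈ Icc s t, ‖∫ x in s..r, h x‖ ≤ B) :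
    ‖∫ r in s..t, a r • h r‖ ≤ a s * B := by
  have ha_mem : ∀ r ∈ Ioc s t, 0 ≤ a r ∧ a r ≤ a s := fun r hr ↦
    ⟨ha0.trans (ha ⟨hr.1.le, hr.2⟩ ⟨hst, le_rfl⟩ hr.2),
      ha ⟨le_rfl, hst⟩ ⟨hr.1.le, hr.2⟩ hr.1.le⟩
  have ha_s : 0 ≤ a s := ha0.trans (ha ⟨le_rfl, hst⟩ ⟨hst, le_rfl⟩ hst)
  have ha_meas : AEMeasurable a (volume.restrict (Ioc s t)) :=
    aemeasurable_restrict_of_antitoneOn measurableSet_Ioc (ha.mono Ioc_subset_Icc_self)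
  have hlayer : ∀ r ∈ Ioc s t,
      a r • h r = ∫ c in Ico 0 (a s), (Iio (a r)).indicator (fun _ ↦ h r) c := by
    intro r hr
    obtain ⟨h0, h1⟩ := ha_mem r hr
    rw [setIntegral_indicator measurableSet_Iio, Ico_inter_Iio]
    simp [h0, h1]
  have hint : Integrable (Function.uncurry fun r c ↦ (Iio (a r)).indicator (fun _ ↦ h r) c)
      ((volume.restrict (Ioc s t)).prod (volume.restrict (Ico 0 (a s)))) :=
    (Integrable.comp_fst hh.1 (volume.restrict (Ico 0 (a s)))).indicator₀
      (nullMeasurableSet_lt measurable_snd.aemeasurable ha_meas.comp_fst)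
  have hslice : ∀ c, ∫ r in Ioc s t, (Iio (a r)).indicator (fun _ ↦ h r) c =
      ∫ r in Ioc s t ∩ {r | c < a r}, h r := by
    intro c
    have hc : NullMeasurableSet {r | c < a r} (volume.restrict (Ioc s t)) :=
      nullMeasurableSet_lt aemeasurable_const ha_meas
    rw [inter_comm, ← Measure.restrict_restrict₀ hc, ← integral_indicator₀ hc]
    rfl
  calc ‖∫ r in s..t, a r • h r‖
      = ‖∫ c in Ico 0 (a s), ∫ r in Ioc s t, (Iio (a r)).indicator (fun _ ↦ h r) c‖ := by
        rw [intervalIntegral.integral_of_le hst, setIntegral_congr_fun measurableSet_Ioc hlayer,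
          integral_integral_swap hint]
    _ ≤ B * volume.real (Ico 0 (a s)) := norm_setIntegral_le_of_norm_le_const (by simp) fun c _ ↦
        (hslice c).symm ▸ norm_setIntegral_superlevel_le_of_antitoneOn hst ha hB c
    _ = a s * B := by simp [ha_s, mul_comm]

theorem norm_sub_sub_integral_le_of_norm_deriv_sub_le [CompleteSpace E]
    {y y' w : ℝ → E} {β : ℝ → ℝ} {s t : ℝ} (hst : s ≤ t)
    (hy : ContinuousOn y (Icc s t)) (hy' : ∀ r ∈ Ioo s t, HasDerivAt y (y' r) r)
    (hw : IntervalIntegrable w volume s t) (hβ : IntervalIntegrable β volume s t)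
    (hle : ∀ r ∈ Ioo s t, ‖y' r - w r‖ ≤ β r) :
    ‖y t - y s - ∫ r in s..t, w r‖ ≤ ∫ r in s..t, β r := by
  have hae {p : ℝ → Prop} (h : ∀ r ∈ Ioo s t, p r) : ∀ᵐ r ∂volume.restrict (Ioo s t), p r :=
    ae_restrict_of_forall_mem measurableSet_Ioo h
  have hmeas : AEStronglyMeasurable y' (volume.restrict (Ioo s t)) :=
    (stronglyMeasurable_deriv y).aestronglyMeasurable.congr (hae fun r hr ↦ (hy' r hr).deriv)
  have hint : IntervalIntegrable y' volume s t := by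
    rw [intervalIntegrable_iff_integrableOn_Ioo_of_le hst] at hw hβ ⊢
    refine (hw.norm.add hβ).mono' hmeas (hae fun r hr ↦ ?_)
    exact (norm_le_norm_add_norm_sub' (y' r) (w r)).trans (add_le_add_right (hle r hr) _)
  rw [← intervalIntegral.integral_eq_sub_of_hasDerivAt_of_le hst hy hy' hint,
    ← intervalIntegral.integral_sub hint hw]
  refine intervalIntegral.norm_integral_le_of_norm_le hst ?_ hβ
  filter_upwards [Ioo_ae_eq_Ioc.mem_iff] with r hr hr'
  exact hle r (hr.2 hr')

theorem norm_sub_sub_integral_smul_le_of_antitoneOn [CompleteSpace E]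
    {y w w₀ : ℝ → E} {m : E} {a : ℝ → ℝ} {s t B C : ℝ}
    (hst : s ≤ t) (ha : AntitoneOn a (Icc s t)) (ha0 : 0 ≤ a t) (hac : ContinuousOn a (Icc s t))
    (hy : ContinuousOn y (Icc s t)) (hy' : ∀ r ∈ Ioo s t, HasDerivAt y (a r • w r) r)
    (hw₀ : IntervalIntegrable w₀ volume s t) (hC : ∀ r ∈ Ioo s t, ‖w r - w₀ r‖ ≤ C)
    (hB : ∀ r ∈ Icc s t, ‖∫ x in s..r, (w₀ x - m)‖ ≤ B) :
    ‖y t - y s - (∫ r in s..t, a r) • m‖ ≤ (∫ r in s..t, a r) * C + a s * B := by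
  rw [← uIcc_of_le hst] at hac
  have hfrozen : ‖y t - y s - ∫ r in s..t, a r • w₀ r‖ ≤ ∫ r in s..t, a r * C :=
    norm_sub_sub_integral_le_of_norm_deriv_sub_le hst hy hy' (hw₀.continuousOn_smul hac)
      (hac.intervalIntegrable.mul_const C) fun r hr ↦ by
        have har : 0 ≤ a r := ha0.trans (ha (Ioo_subset_Icc_self hr) ⟨hst, le_rfl⟩ hr.2.le)
        rw [← smul_sub, norm_smul, Real.norm_of_nonneg har]
        exact mul_le_mul_of_nonneg_left (hC r hr) har
  have hmean : ‖∫ r in s..t, a r • (w₀ r - m)‖ ≤ a s * B :=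
    norm_integral_smul_le_of_antitoneOn hst ha ha0 (hw₀.sub intervalIntegrable_const) hB
  have hsplit : y t - y s - (∫ r in s..t, a r) • m =
      (y t - y s - ∫ r in s..t, a r • w₀ r) + ∫ r in s..t, a r • (w₀ r - m) := by
    simp_rw [smul_sub]
    rw [intervalIntegral.integral_sub (hw₀.continuousOn_smul hac)
      (intervalIntegrable_const.continuousOn_smul hac), intervalIntegral.integral_smul_const]
    abel
  rw [hsplit, ← intervalIntegral.integral_mul_const]
  exact norm_add_le_of_le hfrozen hmean

theorem intervalIntegrable_of_tendsto_average_ne_zero {h : ℝ → E} {m : E} (hm : m ≠ 0)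
    (hlim : Tendsto (fun T : ℝ ↦ (1 / T) • ∫ r in (0 : ℝ)..T, h r) atTop (𝓝 m)) {t : ℝ}
    (ht : 0 ≤ t) : IntervalIntegrable h volume 0 t := by
  obtain ⟨T, hT, htT⟩ := ((hlim.eventually_ne hm).and (eventually_ge_atTop t)).exists
  have hint : IntervalIntegrable h volume 0 T := by
    -- Otherwise the average over `[0, T]` has the junk value `0`.
    by_contra hT'
    simp [intervalIntegral.integral_undef hT'] at hT
  refine hint.mono_set ?_
  rw [uIcc_of_le ht, uIcc_of_le (ht.trans htT)]
  exact Icc_subset_Icc_right htT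

theorem norm_integral_sub_le_of_norm_average_sub_le [CompleteSpace E] {h : ℝ → E} {m : E} {C : ℝ}
    (hint : ∀ t, 0 ≤ t → IntervalIntegrable h volume 0 t)
    (hC : ∀ T, 0 < T → ‖(1 / T) • (∫ r in (0 : ℝ)..T, h r) - m‖ ≤ C / T) {s t : ℝ}
    (hs : 0 < s) (hst : s ≤ t) : ‖∫ r in s..t, (h r - m)‖ ≤ 2 * C := by
  have hprim : ∀ T, 0 < T → ‖∫ r in (0 : ℝ)..T, (h r - m)‖ ≤ C := fun T hT ↦ by
    have hscale : ∫ r in (0 : ℝ)..T, (h r - m) =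
        T • ((1 / T) • (∫ r in (0 : ℝ)..T, h r) - m) := by
      rw [intervalIntegral.integral_sub (hint T hT.le) intervalIntegrable_const,
        intervalIntegral.integral_const, sub_zero, smul_sub, smul_smul, mul_one_div_cancel hT.ne',
        one_smul]
    rw [hscale, norm_smul, Real.norm_of_nonneg hT.le, ← le_div_iff₀' hT]
    exact hC T hT
  have hi {T : ℝ} (hT : 0 ≤ T) : IntervalIntegrable (fun r ↦ h r - m) volume 0 T :=
    (hint T hT).sub intervalIntegrable_const
  have ht := hs.trans_le hst
  rw [← intervalIntegral.integral_interval_sub_left (hi ht.le) (hi hs.le), two_mul]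
  exact norm_sub_le_of_le (hprim t ht) (hprim s hs)

end

/-! ### Foster–Lyapunov bound -/

theorem eventually_le_of_drift {w r : ℕ → ℝ} {c v δ : ℝ} (hw : ∀ n, 0 ≤ w n) (hδ : 0 < δ)
    (hc : 0 < c) (hdrift : ∀ n, c < r n → w (n + 1) ≤ w n - δ * r n)
    (hreset : ∀ n, r n ≤ c → w (n + 1) ≤ v) : ∀ᶠ n in atTop, r n ≤ max c (v / δ) := by
  obtain ⟨k, hk⟩ : ∃ k, r k ≤ c := by
    by_contra! hr
    have hdecr : ∀ n : ℕ, w n ≤ w 0 - n * (δ * c) := by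
      intro n
      induction n with
      | zero => simp
      | succ n ih =>
        push_cast
        linarith [hdrift n (hr n), mul_le_mul_of_nonneg_left (hr n).le hδ.le]
    obtain ⟨n, hn⟩ := exists_nat_gt (w 0 / (δ * c))
    rw [div_lt_iff₀ (by positivity)] at hn
    linarith [hdecr n, hw n]
  have htrapped : ∀ n ≥ k + 1, w n ≤ v := by
    intro n hn
    induction n, hn using Nat.le_induction with
    | base => exact hreset k hk
    | succ n _ ih =>
      rcases le_or_gt (r n) c with hr | hr
      · exact hreset n hr
      · linarith [hdrift n hr, mul_pos hδ (hc.trans hr)]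
  filter_upwards [eventually_ge_atTop (k + 1)] with n hn
  rcases le_or_gt (r n) c with hr | hr
  · exact le_max_of_le_left hr
  · refine le_max_of_le_right ((le_div_iff₀ hδ).2 ?_)
    linarith [hdrift n hr, htrapped n hn, hw (n + 1)]

theorem exists_forall_norm_le_of_drift {E : Type*} [SeminormedAddCommGroup E]
    {V : E → ℝ} {C : ℝ≥0} {y : ℝ → E} {c δ G T u₀ : ℝ}
    (hV0 : ∀ x, 0 ≤ V x) (hV : LipschitzWith C V) (hc : 0 < c) (hδ : 0 < δ) (hT : 0 < T)
    (hgrowth : ∀ u ≥ u₀, ∀ s ∈ Icc 0 T, 1 + ‖y (u + s)‖ ≤ G * (1 + ‖y u‖))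
    (hdrift : ∀ u ≥ u₀, c < ‖y u‖ → V (y (u + T)) ≤ V (y u) - δ * ‖y u‖) :
    ∃ u₁, ∀ u ≥ u₁, ‖y u‖ ≤ G * (1 + max c ((V 0 + C * (G * (1 + c))) / δ)) := by
  have hG : 0 ≤ G := by
    have h := hgrowth u₀ le_rfl 0 ⟨le_rfl, hT.le⟩
    rw [add_zero] at h
    exact (pos_of_mul_pos_left (lt_of_lt_of_le (by positivity) h) (by positivity)).le
  have hu (n : ℕ) : u₀ + n * T ≥ u₀ := le_add_of_nonneg_right (by positivity)
  have hsucc (n : ℕ) : u₀ + (n + 1 : ℕ) * T = u₀ + n * T + T := by push_cast; ring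
  have hsampled := eventually_le_of_drift (w := fun n ↦ V (y (u₀ + n * T)))
    (r := fun n ↦ ‖y (u₀ + n * T)‖) (v := V 0 + C * (G * (1 + c))) (fun _ ↦ hV0 _) hδ hc
    (fun n hn ↦ hsucc n ▸ hdrift _ (hu n) hn) fun n hn ↦ by
      have hnorm : ‖y (u₀ + (n + 1 : ℕ) * T)‖ ≤ G * (1 + c) := by
        have h := hgrowth _ (hu n) T ⟨hT.le, le_rfl⟩
        rw [← hsucc] at h
        linarith [mul_le_mul_of_nonneg_left hn hG]
      have hlip := (le_abs_self _).trans (hV.norm_sub_le (y (u₀ + (n + 1 : ℕ) * T)) 0)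
      rw [sub_zero] at hlip
      linarith [mul_le_mul_of_nonneg_left hnorm C.coe_nonneg]
  obtain ⟨N, hN⟩ := eventually_atTop.1 hsampled
  refine ⟨u₀ + N * T, fun u hNu ↦ ?_⟩
  set n := ⌊(u - u₀) / T⌋₊
  have hNn : N ≤ n := Nat.le_floor ((le_div_iff₀ hT).2 (by linarith))
  have hquot : 0 ≤ (u - u₀) / T := div_nonneg (by linarith [hu N]) hT.le
  have hlo : n * T ≤ u - u₀ := (le_div_iff₀ hT).1 (Nat.floor_le hquot)
  have hhi : u - u₀ < (n + 1) * T := (div_lt_iff₀ hT).1 (Nat.lt_floor_add_one _)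
  have h := hgrowth _ (hu n) (u - (u₀ + n * T)) ⟨by linarith, by linarith⟩
  rw [add_sub_cancel] at h
  linarith [mul_le_mul_of_nonneg_left (hN n hNn) hG]

/-! ### The averaged flow and the QSA process -/

section

/-- Assumption (A5) on the gain `a`, its primitive `g` (the clock of the time-scaled process) and
the inverse clock `ginv`. That `ginv` inverts `g` on all of `[0, ∞)` encodes the divergence of the
integral of `a`. -/
structure IsGainClock (a g ginv : ℝ → ℝ) : Prop where
  pos : ∀ t, 0 ≤ t → 0 < a t
  continuousOn : ContinuousOn a (Ici 0)
  antitoneOn : AntitoneOn a (Ici 0)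
  tendsto_zero : Tendsto a atTop (𝓝 0)
  clock_eq : ∀ t, g t = ∫ r in (0 : ℝ)..t, a r
  inv_nonneg : ∀ u, 0 ≤ u → 0 ≤ ginv u
  clock_inv : ∀ u, 0 ≤ u → g (ginv u) = u

namespace IsGainClock

variable {a g ginv : ℝ → ℝ} {s t u : ℝ}

theorem intervalIntegrable (hg : IsGainClock a g ginv) (hs : 0 ≤ s) (ht : 0 ≤ t) :
    IntervalIntegrable a volume s t :=
  (hg.continuousOn.mono fun _ hr ↦ (le_min hs ht).trans hr.1).intervalIntegrable

theorem integral_eq_sub (hg : IsGainClock a g ginv) (hs : 0 ≤ s) (ht : 0 ≤ t) :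
    ∫ r in s..t, a r = g t - g s := by
  rw [hg.clock_eq, hg.clock_eq, intervalIntegral.integral_interval_sub_left
    (hg.intervalIntegrable le_rfl ht) (hg.intervalIntegrable le_rfl hs)]

theorem strictMonoOn (hg : IsGainClock a g ginv) : StrictMonoOn g (Ici 0) :=
  fun _ hs _ ht hst ↦ sub_pos.1 <| hg.integral_eq_sub hs ht ▸
    intervalIntegral.intervalIntegral_pos_of_pos_on (hg.intervalIntegrable hs ht)
      (fun r hr ↦ hg.pos r (hs.trans hr.1.le)) hst

theorem clock_nonneg (hg : IsGainClock a g ginv) (ht : 0 ≤ t) : 0 ≤ g t := by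
  simpa [hg.clock_eq 0] using hg.strictMonoOn.monotoneOn self_mem_Ici ht ht

theorem hasDerivAt (hg : IsGainClock a g ginv) (ht : 0 < t) : HasDerivAt g (a t) t := by
  rw [funext hg.clock_eq]
  exact intervalIntegral.integral_hasDerivAt_right (hg.intervalIntegrable le_rfl ht.le)
    (hg.continuousOn.mono Ioi_subset_Ici_self |>.stronglyMeasurableAtFilter isOpen_Ioi t ht)
    (hg.continuousOn.continuousAt (Ici_mem_nhds ht))

theorem inv_clock (hg : IsGainClock a g ginv) (ht : 0 ≤ t) : ginv (g t) = t :=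
  hg.strictMonoOn.injOn (hg.inv_nonneg _ (hg.clock_nonneg ht)) ht
    (hg.clock_inv _ (hg.clock_nonneg ht))

theorem le_inv_iff (hg : IsGainClock a g ginv) (ht : 0 ≤ t) (hu : 0 ≤ u) :
    t ≤ ginv u ↔ g t ≤ u := by
  rw [← hg.strictMonoOn.le_iff_le ht (hg.inv_nonneg u hu), hg.clock_inv u hu]

end IsGainClock

variable {E : Type*} [NormedAddCommGroup E] [NormedSpace ℝ E]

/-- Assumption (A2): where the norm exceeds `c`, the function `V` decreases along the flow of `F` at
a rate no smaller than the norm. The solutions quantified over are those on `[0, ∞)`. -/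
def LyapunovDrift (V : E → ℝ) (F : E → E) (c : ℝ) : Prop :=
  ∀ χ : ℝ → E, (∀ w, 0 ≤ w → HasDerivAt χ (F (χ w)) w) →
    ∀ s, 0 ≤ s → ∀ T, 0 ≤ T → T ≤ 1 → c < ‖χ s‖ → V (χ (s + T)) - V (χ s) ≤ -T * ‖χ s‖

namespace LyapunovDrift

variable {V : E → ℝ} {F : E → E} {c : ℝ} {C K : ℝ≥0} {x : E}

theorem ne_zero (h : LyapunovDrift V F c) (hc : c < ‖x‖) (hx : x ≠ 0) : F x ≠ 0 := by
  -- An equilibrium `x` would be a constant solution along which `V` strictly decreases.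
  intro hF
  have := h (fun _ ↦ x) (fun w _ ↦ hF ▸ hasDerivAt_const w x) 0 le_rfl 1 zero_le_one le_rfl hc
  linarith [norm_pos_iff.2 hx]

theorem le_of_euler_step [CompleteSpace E] (h : LyapunovDrift V F c) (hV : LipschitzWith C V)
    (hF : LipschitzWith K F) (hF0 : ‖F 0‖ ≤ K) (hc : c < ‖x‖) {T : ℝ} (hT : 0 ≤ T) (hT1 : T ≤ 1)
    (z : E) :
    V z ≤ V x - T * ‖x‖ +
      C * (‖z - x - T • F x‖ + T * (K * ((1 + ‖x‖) * (Real.exp (K * T) - 1)))) := by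
  obtain ⟨χ, rfl, hχ⟩ := exists_forall_hasDerivAt_of_lipschitzWith hF x
  have hnear : ∀ r ∈ Ioo 0 T,
      ‖F (χ r) - F (χ 0)‖ ≤ K * ((1 + ‖χ 0‖) * (Real.exp (K * T) - 1)) := fun r hr ↦ by
    have hgrowth := norm_sub_le_of_norm_deriv_le_one_add hr.1.le
      (fun q _ ↦ (hχ q).hasDerivWithinAt)
      (fun q _ ↦ norm_le_mul_one_add_of_lipschitzWith hF hF0 (χ q)) K.coe_nonneg
    refine (hF.norm_sub_le _ _).trans (mul_le_mul_of_nonneg_left (hgrowth.trans ?_) K.coe_nonneg)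
    gcongr
    linarith [hr.2]
  have heuler : ‖χ T - χ 0 - T • F (χ 0)‖ ≤
      T * (K * ((1 + ‖χ 0‖) * (Real.exp (K * T) - 1))) := by
    simpa using norm_sub_sub_integral_smul_le_of_antitoneOn (a := fun _ ↦ 1) (m := F (χ 0)) (B := 0)
      hT antitoneOn_const zero_le_one continuousOn_const
      (fun r _ ↦ (hχ r).continuousAt.continuousWithinAt)
      (fun r _ ↦ by simpa using hχ r) intervalIntegrable_const hnear (by simp)
  have hdrift := h χ (fun w _ ↦ hχ w) 0 le_rfl T hT hT1 hc
  have hdist : ‖z - χ T‖ ≤ ‖z - χ 0 - T • F (χ 0)‖ + ‖χ T - χ 0 - T • F (χ 0)‖ := by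
    simpa using norm_sub_le (z - χ 0 - T • F (χ 0)) (χ T - χ 0 - T • F (χ 0))
  have hlip := (le_abs_self _).trans (hV.norm_sub_le z (χ T))
  rw [zero_add] at hdrift
  linarith [mul_le_mul_of_nonneg_left (hdist.trans (add_le_add_right heuler _)) C.coe_nonneg]

end LyapunovDrift

/-- Assumptions (A3) and (A4) on the field `f` driven by `ξ` and its average `F`, together with the
bound on `f 0 (ξ t)`; a single constant `K` serves for all Lipschitz and growth bounds. -/
structure IsAveragedField {X : Type*} (f : E → X → E) (ξ : ℝ → X) (F : E → E) (K : ℝ≥0)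
    (b : ℝ) : Prop where
  norm_average_sub_le : ∀ x T, 0 < T →
    ‖(1 / T) • (∫ t in (0 : ℝ)..T, f x (ξ t)) - F x‖ ≤ b / T * (1 + ‖x‖)
  lipschitzWith : ∀ p, LipschitzWith K fun x ↦ f x p
  lipschitzWith_mean : LipschitzWith K F
  norm_zero_le : ∀ t, 0 ≤ t → ‖f 0 (ξ t)‖ ≤ K

/-- The time-scaled QSA process `θ' u = f (θ u) (ξ (g⁻¹ u))` on `[0, ∞)`. -/
def IsTimeScaledQSA {X : Type*} (f : E → X → E) (ξ : ℝ → X) (ginv : ℝ → ℝ) (θ : ℝ → E) : Prop :=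
  ∀ u, 0 ≤ u → HasDerivAt θ (f (θ u) (ξ (ginv u))) u

variable {X : Type*} {f : E → X → E} {ξ : ℝ → X} {F : E → E} {K : ℝ≥0} {b : ℝ}

namespace IsAveragedField

theorem norm_le (hf : IsAveragedField f ξ F K b) (x : E) {t : ℝ} (ht : 0 ≤ t) :
    ‖f x (ξ t)‖ ≤ K * (1 + ‖x‖) :=
  norm_le_mul_one_add_of_lipschitzWith (hf.lipschitzWith (ξ t)) (hf.norm_zero_le t ht) x

theorem tendsto_average (hf : IsAveragedField f ξ F K b) (x : E) :
    Tendsto (fun T : ℝ ↦ (1 / T) • ∫ t in (0 : ℝ)..T, f x (ξ t)) atTop (𝓝 (F x)) := by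
  have hzero : Tendsto (fun T : ℝ ↦ b / T * (1 + ‖x‖)) atTop (𝓝 0) := by
    simpa using (tendsto_id.const_div_atTop b).mul_const (1 + ‖x‖)
  refine tendsto_iff_norm_sub_tendsto_zero.2 (squeeze_zero' (.of_forall fun _ ↦ norm_nonneg _)
    ?_ hzero)
  filter_upwards [eventually_gt_atTop 0] with T hT using hf.norm_average_sub_le x T hT

theorem norm_mean_zero_le (hf : IsAveragedField f ξ F K b) : ‖F 0‖ ≤ K := by
  refine le_of_tendsto (hf.tendsto_average 0).norm ?_
  filter_upwards [eventually_gt_atTop 0] with T hT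
  have hint : ‖∫ t in (0 : ℝ)..T, f 0 (ξ t)‖ ≤ K * |T - 0| :=
    intervalIntegral.norm_integral_le_of_norm_le_const fun t ht ↦
      hf.norm_zero_le t (uIoc_of_le hT.le ▸ ht).1.le
  rw [norm_smul, Real.norm_of_nonneg (by positivity), one_div_mul_eq_div, div_le_iff₀ hT]
  simpa [abs_of_pos hT] using hint

theorem intervalIntegrable (hf : IsAveragedField f ξ F K b) {x : E} (hx : F x ≠ 0) {t : ℝ}
    (ht : 0 ≤ t) : IntervalIntegrable (fun r ↦ f x (ξ r)) volume 0 t :=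
  intervalIntegrable_of_tendsto_average_ne_zero hx (hf.tendsto_average x) ht

theorem norm_integral_sub_le [CompleteSpace E] (hf : IsAveragedField f ξ F K b) {x : E}
    (hx : F x ≠ 0) {s t : ℝ} (hs : 0 < s) (hst : s ≤ t) :
    ‖∫ r in s..t, (f x (ξ r) - F x)‖ ≤ 2 * (b * (1 + ‖x‖)) :=
  norm_integral_sub_le_of_norm_average_sub_le (fun _ ↦ hf.intervalIntegrable hx)
    (fun T hT ↦ div_mul_eq_mul_div b T _ ▸ hf.norm_average_sub_le x T hT) hs hst

end IsAveragedField

namespace IsTimeScaledQSA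

variable {a g ginv : ℝ → ℝ} {θ : ℝ → E}

theorem norm_sub_le (hθ : IsTimeScaledQSA f ξ ginv θ) (hf : IsAveragedField f ξ F K b)
    (hg : IsGainClock a g ginv) {u v : ℝ} (hu : 0 ≤ u) (huv : u ≤ v) :
    ‖θ v - θ u‖ ≤ (1 + ‖θ u‖) * (Real.exp (K * (v - u)) - 1) :=
  norm_sub_le_of_norm_deriv_le_one_add huv
    (fun r hr ↦ (hθ r (hu.trans hr.1)).hasDerivWithinAt)
    (fun r hr ↦ hf.norm_le (θ r) (hg.inv_nonneg r (hu.trans hr.1))) K.coe_nonneg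

theorem hasDerivAt_comp_clock (hθ : IsTimeScaledQSA f ξ ginv θ) (hg : IsGainClock a g ginv) {t : ℝ}
    (ht : 0 < t) : HasDerivAt (fun r ↦ θ (g r)) (a t • f (θ (g t)) (ξ t)) t := by
  have h := (hθ (g t) (hg.clock_nonneg ht.le)).scomp t (hg.hasDerivAt ht)
  rwa [hg.inv_clock ht.le] at h

theorem norm_sub_sub_smul_le [CompleteSpace E] (hθ : IsTimeScaledQSA f ξ ginv θ)
    (hf : IsAveragedField f ξ F K b) (hg : IsGainClock a g ginv) {s t : ℝ} (hs : 0 < s)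
    (hst : s ≤ t) (hF : F (θ (g s)) ≠ 0) :
    ‖θ (g t) - θ (g s) - (g t - g s) • F (θ (g s))‖ ≤
      (g t - g s) * (K * ((1 + ‖θ (g s)‖) * (Real.exp (K * (g t - g s)) - 1))) +
        a s * (2 * (b * (1 + ‖θ (g s)‖))) := by
  have hIci : Icc s t ⊆ Ici 0 := fun r hr ↦ hs.le.trans hr.1
  have hnear : ∀ r ∈ Ioo s t, ‖f (θ (g r)) (ξ r) - f (θ (g s)) (ξ r)‖ ≤
      K * ((1 + ‖θ (g s)‖) * (Real.exp (K * (g t - g s)) - 1)) := fun r hr ↦ by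
    have hr0 : 0 ≤ r := hs.le.trans hr.1.le
    have hsr := hg.strictMonoOn.monotoneOn hs.le hr0 hr.1.le
    have hrt := hg.strictMonoOn.monotoneOn hr0 (hs.le.trans hst) hr.2.le
    refine ((hf.lipschitzWith (ξ r)).norm_sub_le _ _).trans (mul_le_mul_of_nonneg_left
      ((hθ.norm_sub_le hf hg (hg.clock_nonneg hs.le) hsr).trans ?_) K.coe_nonneg)
    gcongr
  rw [← hg.integral_eq_sub hs.le (hs.le.trans hst)] at hnear ⊢
  exact norm_sub_sub_integral_smul_le_of_antitoneOn hst (hg.antitoneOn.mono hIci)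
    (hg.pos t (hs.le.trans hst)).le (hg.continuousOn.mono hIci)
    (fun r hr ↦ (hθ.hasDerivAt_comp_clock hg (hs.trans_le hr.1)).continuousAt.continuousWithinAt)
    (fun r hr ↦ hθ.hasDerivAt_comp_clock hg (hs.trans hr.1))
    ((hf.intervalIntegrable hF hs.le).symm.trans (hf.intervalIntegrable hF (hs.le.trans hst)))
    hnear fun r hr ↦ hf.norm_integral_sub_le hF hs hr.1

end IsTimeScaledQSA

theorem exists_window_forall_lyapunov_le_sub [CompleteSpace E] {V : E → ℝ} {C : ℝ≥0} {c : ℝ}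
    {a g ginv : ℝ → ℝ} (hf : IsAveragedField f ξ F K b) (hg : IsGainClock a g ginv)
    (hV : LipschitzWith C V) (hdrift : LyapunovDrift V F c) :
    ∃ T > 0, ∃ u₀ ≥ 0, ∀ θ, IsTimeScaledQSA f ξ ginv θ → ∀ u ≥ u₀, max c 1 < ‖θ u‖ →
      V (θ (u + T)) ≤ V (θ u) - T / 2 * ‖θ u‖ := by
  obtain ⟨T, hTsmall, hT, hT1⟩ : ∃ T, 16 * C * K * (Real.exp (K * T) - 1) < 1 ∧ 0 < T ∧ T < 1 := by
    have hcont : Continuous fun T : ℝ ↦ 16 * C * K * (Real.exp (K * T) - 1) := by fun_prop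
    have hev := (hcont.tendsto' 0 0 (by simp)).eventually_lt_const one_pos
    exact ((hev.filter_mono nhdsWithin_le_nhds).and (Ioo_mem_nhdsGT one_pos)).exists
  obtain ⟨s₀, hs₀, hasmall⟩ : ∃ s₀, 0 < s₀ ∧ ∀ s ≥ s₀, a s * (16 * C * b) < T := by
    have hlim := hg.tendsto_zero.mul_const (16 * C * b)
    rw [zero_mul] at hlim
    obtain ⟨s₀, h⟩ := eventually_atTop.1 (hlim.eventually_lt_const hT)
    exact ⟨max s₀ 1, by positivity, fun s hs ↦ h s (le_of_max_le_left hs)⟩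
  refine ⟨T, hT, g s₀, hg.clock_nonneg hs₀.le, fun θ hθ u hu hx ↦ ?_⟩
  obtain ⟨hcx, hx1⟩ := max_lt_iff.1 hx
  have hu0 : 0 ≤ u := (hg.clock_nonneg hs₀.le).trans hu
  have huT : 0 ≤ u + T := add_nonneg hu0 hT.le
  have hs : s₀ ≤ ginv u := (hg.le_inv_iff hs₀.le hu0).2 hu
  have hst : ginv u ≤ ginv (u + T) :=
    (hg.le_inv_iff (hg.inv_nonneg u hu0) huT).2 ((hg.clock_inv u hu0).trans_le (by linarith))
  have hstep := hθ.norm_sub_sub_smul_le hf hg (hs₀.trans_le hs) hst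
  rw [hg.clock_inv u hu0, hg.clock_inv _ huT, add_sub_cancel_left] at hstep
  have hFx := hdrift.ne_zero hcx (norm_pos_iff.1 (one_pos.trans hx1))
  have hLyap := hdrift.le_of_euler_step hV hf.lipschitzWith_mean hf.norm_mean_zero_le hcx hT.le
    hT1.le (θ (u + T))
  have hnorm : 0 < 1 + ‖θ u‖ := by positivity
  have herror := mul_le_mul_of_nonneg_left (hstep hFx) C.coe_nonneg
  have hfreeze : T * (1 + ‖θ u‖) * (16 * C * K * (Real.exp (K * T) - 1)) ≤ T * (1 + ‖θ u‖) * 1 :=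
    mul_le_mul_of_nonneg_left hTsmall.le (mul_pos hT hnorm).le
  have haverage : (1 + ‖θ u‖) * (a (ginv u) * (16 * C * b)) ≤ (1 + ‖θ u‖) * T :=
    mul_le_mul_of_nonneg_left (hasmall _ hs).le hnorm.le
  have hlarge : T * 1 < T * ‖θ u‖ := mul_lt_mul_of_pos_left hx1 hT
  -- The freezing and averaging errors are each at most `T / 8 * (1 + ‖θ u‖) ≤ T / 4 * ‖θ u‖`.
  linarith

theorem ultimate_boundedness_time_scaled_QSA_general [CompleteSpace E] {V : E → ℝ} {C : ℝ≥0}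
    {c : ℝ} {a g ginv : ℝ → ℝ} (hf : IsAveragedField f ξ F K b) (hg : IsGainClock a g ginv)
    (hV0 : ∀ x, 0 ≤ V x) (hV : LipschitzWith C V) (hdrift : LyapunovDrift V F c) :
    ∃ R : ℝ, ∀ θ, IsTimeScaledQSA f ξ ginv θ → ∃ u₁, ∀ u, u₁ ≤ u → ‖θ u‖ ≤ R := by
  obtain ⟨T, hT, u₀, hu₀, hwindow⟩ := exists_window_forall_lyapunov_le_sub hf hg hV hdrift
  refine ⟨_, fun θ hθ ↦ exists_forall_norm_le_of_drift (G := Real.exp (K * T)) hV0 hV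
    (lt_max_of_lt_right one_pos) (half_pos hT) hT (fun u hu s hs ↦ ?_) (hwindow θ hθ)⟩
  have hgrowth := hθ.norm_sub_le hf hg (hu₀.trans hu) (le_add_of_nonneg_right hs.1)
  rw [add_sub_cancel_left] at hgrowth
  calc 1 + ‖θ (u + s)‖ ≤ 1 + (‖θ u‖ + ‖θ (u + s) - θ u‖) := by
        gcongr
        exact norm_le_norm_add_norm_sub' _ _
    _ ≤ Real.exp (K * s) * (1 + ‖θ u‖) := by linarith
    _ ≤ Real.exp (K * T) * (1 + ‖θ u‖) := by
        gcongr
        exact hs.2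

end

/-- Ultimate boundedness of the time-scaled QSA process (Proposition 6): under
(A2)–(A5) and boundedness of `f(0,ξ(·))`, there is `b < ∞` such that every time-scaled
QSA process satisfies `limsup_{u→∞} ‖θ̂(u)‖ ≤ b`, for every initial condition. -/
theorem ultimate_boundedness_time_scaled_QSA
    (dd mm : ℕ)
    (f : EuclideanSpace ℝ (Fin dd) → EuclideanSpace ℝ (Fin mm) → EuclideanSpace ℝ (Fin dd))
    (ξ : ℝ → EuclideanSpace ℝ (Fin mm)) (hξ : ContinuousOn ξ (Set.Ici 0))
    (fbar : EuclideanSpace ℝ (Fin dd) → EuclideanSpace ℝ (Fin dd))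
    (hfbar : ∀ θ, Tendsto (fun T : ℝ => (1 / T) • ∫ t in (0:ℝ)..T, f θ (ξ t))
      atTop (nhds (fbar θ)))
    -- (A5): the gain process
    (a : ℝ → ℝ) (ha_pos : ∀ t : ℝ, 0 ≤ t → 0 < a t) (ha_cont : ContinuousOn a (Set.Ici 0))
    (ha_dec : ∀ s t : ℝ, 0 ≤ s → s ≤ t → a t ≤ a s)
    (ha_to0 : Tendsto a atTop (nhds 0))
    (g : ℝ → ℝ) (hg : ∀ t, g t = ∫ r in (0:ℝ)..t, a r)
    (hg_top : Tendsto g atTop atTop)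
    (ginv : ℝ → ℝ) (hginv : ∀ u : ℝ, 0 ≤ u → 0 ≤ ginv u ∧ g (ginv u) = u)
    (hginv' : ∀ t : ℝ, 0 ≤ t → ginv (g t) = t)
    -- (A2): the Lyapunov drift condition for the averaged flow
    (V : EuclideanSpace ℝ (Fin dd) → ℝ) (hV_cont : Continuous V)
    (hV_nonneg : ∀ x, 0 ≤ V x) (c₀ : ℝ) (hc₀ : 0 < c₀)
    (hA2 : ∀ χ : ℝ → EuclideanSpace ℝ (Fin dd),
      (∀ w : ℝ, 0 ≤ w → HasDerivAt χ (fbar (χ w)) w) →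
      ∀ s : ℝ, 0 ≤ s → ∀ T : ℝ, 0 ≤ T → T ≤ 1 → c₀ < ‖χ s‖ →
        V (χ (s + T)) - V (χ s) ≤ -T * ‖χ s‖)
    -- (A3)
    (b₀ : ℝ)
    (hA3 : ∀ θ, ∀ T : ℝ, 0 < T →
      ‖(1 / T) • (∫ t in (0:ℝ)..T, f θ (ξ t)) - fbar θ‖ ≤ (b₀ / T) * (1 + ‖θ‖))
    -- (A4)
    (L : ℝ)
    (hV_lip : ∀ θ θ', |V θ' - V θ| ≤ L * ‖θ' - θ‖)
    (hfbar_lip : ∀ θ θ', ‖fbar θ' - fbar θ‖ ≤ L * ‖θ' - θ‖)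
    (hf_lip : ∀ x θ θ', ‖f θ' x - f θ x‖ ≤ L * ‖θ' - θ‖)
    -- boundedness of f(0, ξ(·))
    (hf0 : ∃ M : ℝ, ∀ t : ℝ, 0 ≤ t → ‖f 0 (ξ t)‖ ≤ M) :
    ∃ b : ℝ, ∀ θhat : ℝ → EuclideanSpace ℝ (Fin dd),
      (∀ u : ℝ, 0 ≤ u → HasDerivAt θhat (f (θhat u) (ξ (ginv u))) u) →
      ∃ u₁ : ℝ, ∀ u : ℝ, u₁ ≤ u → ‖θhat u‖ ≤ b := by
  obtain ⟨M, hM⟩ := hf0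
  have hlip {F : EuclideanSpace ℝ (Fin dd) → EuclideanSpace ℝ (Fin dd)}
      (hF : ∀ θ θ', ‖F θ' - F θ‖ ≤ L * ‖θ' - θ‖) : LipschitzWith (max L.toNNReal M.toNNReal) F :=
    (LipschitzWith.of_dist_le' fun θ' θ ↦ by simpa [dist_eq_norm] using hF θ θ').weaken
      (le_max_left _ _)
  have hfield : IsAveragedField f ξ fbar (max L.toNNReal M.toNNReal) b₀ :=
    { norm_average_sub_le := hA3
      lipschitzWith := fun x ↦ hlip (hf_lip x)
      lipschitzWith_mean := hlip hfbar_lip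
      norm_zero_le := fun t ht ↦ (hM t ht).trans <| (Real.le_coe_toNNReal M).trans <|
        NNReal.coe_le_coe.2 (le_max_right _ _) }
  have hclock : IsGainClock a g ginv :=
    ⟨ha_pos, ha_cont, fun s hs t _ hst ↦ ha_dec s t hs hst, ha_to0, hg, fun u hu ↦ (hginv u hu).1,
      fun u hu ↦ (hginv u hu).2⟩
  have hV : LipschitzWith L.toNNReal V :=
    .of_dist_le' fun θ' θ ↦ by simpa [dist_eq_norm] using hV_lip θ θ'
  exact ultimate_boundedness_time_scaled_QSA_general hfield hclock hV_nonneg hV hA2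
end

section
/- Verification of Assumption (A2) for a linear Hurwitz system. Let A be a real d×d Hurwitz matrix (every eigenvalue of A, viewed as a complex matrix, has strictly negative real part), and let P be a real symmetric positive definite d×d matrix satisfying the Lyapunov equation P·A + Aᵀ·P = −I. Then there exist constants k > 0 and c₀ > 0 such that the function V(x) = k·√(xᵀ P x) is Lipschitz on ℝ^d, and for every solution χ of the linear ODE dχ/dt(t) = A·χ(t), every s ≥ 0, and every 0 ≤ T ≤ 1, if ‖χ(s)‖ > c₀ then V(χ(s+T)) − V(χ(s)) ≤ −T·‖χ(s)‖. -/
open Filter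

/-!
Along a solution the quadratic form `q(x) = xᵀPx` has derivative `-‖χ‖²`, and `r q(x) ≤ ‖x‖²` for
some `r > 0`, so Grönwall's inequality gives `√q(χ(s + T)) ≤ exp(-rT/2) √q(χ(s))`. By convexity of
the exponential `1 - exp(-rT/2) ≥ T (1 - exp(-r/2))` for `0 ≤ T ≤ 1`, and `√q(x) ≥ c ‖x‖` by
coercivity. Hence `√q` drops by at least `T c (1 - exp(-r/2)) ‖χ(s)‖`, which fixes `k` as the
reciprocal of `c (1 - exp(-r/2))`.
-/

section ScalarDecay

theorem mul_one_sub_exp_neg_le {a T : ℝ} (hT : 0 ≤ T) (hT1 : T ≤ 1) :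
    T * (1 - Real.exp (-a)) ≤ 1 - Real.exp (-(a * T)) := by
  have hconv := convexOn_exp.2 (Set.mem_univ 0) (Set.mem_univ (-a)) (sub_nonneg.2 hT1) hT
    (sub_add_cancel 1 T)
  simp only [smul_eq_mul, mul_zero, zero_add, Real.exp_zero, mul_one] at hconv
  rw [mul_comm a T, ← mul_neg]
  linarith

theorem sqrt_le_exp_mul_sqrt_of_hasDerivAt {q q' : ℝ → ℝ} {r s T : ℝ} (hT : 0 ≤ T)
    (hq : ∀ t ∈ Set.Icc s (s + T), HasDerivAt q (q' t) t)
    (hq' : ∀ t ∈ Set.Icc s (s + T), q' t ≤ -r * q t) :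
    √(q (s + T)) ≤ Real.exp (-(r / 2 * T)) * √(q s) := by
  have hgronwall : q (s + T) ≤ q s * Real.exp (-r * T) := by
    have h := le_gronwallBound_of_liminf_deriv_right_le (K := -r) (ε := 0)
      (fun t ht ↦ (hq t ht).continuousAt.continuousWithinAt)
      (fun t ht _ ↦ (hq t (Set.Ico_subset_Icc_self ht)).hasDerivWithinAt.liminf_right_slope_le)
      le_rfl (fun t ht ↦ (hq' t (Set.Ico_subset_Icc_self ht)).trans_eq (add_zero _).symm)
      (s + T) (Set.right_mem_Icc.2 (le_add_of_nonneg_right hT))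
    rwa [gronwallBound_ε0, add_sub_cancel_left] at h
  have hexp : Real.exp (-r * T) = Real.exp (-(r / 2 * T)) ^ 2 := by
    rw [← Real.exp_nat_mul]
    ring_nf
  calc √(q (s + T)) ≤ √(Real.exp (-(r / 2 * T)) ^ 2 * q s) :=
        Real.sqrt_le_sqrt (by rwa [← hexp, mul_comm])
    _ = Real.exp (-(r / 2 * T)) * √(q s) := by
        rw [Real.sqrt_mul (sq_nonneg _), Real.sqrt_sq (Real.exp_nonneg _)]

end ScalarDecay

section PositiveForm

variable {M : Type*} [AddCommGroup M] [Module ℝ M] {B : LinearMap.BilinForm ℝ M}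

theorem apply_add_apply_swap_le_two_mul_sqrt (hB : ∀ x, 0 ≤ B x x) (x y : M) :
    B x y + B y x ≤ 2 * (√(B x x) * √(B y y)) := by
  -- Cauchy–Schwarz for the symmetric form `B + B.flip`.
  have hsq := LinearMap.BilinForm.apply_mul_apply_le_of_forall_zero_le (B + LinearMap.flip B)
    (fun z ↦ add_nonneg (hB z) (hB z)) x y
  simp only [LinearMap.add_apply, LinearMap.flip_apply] at hsq
  refine le_of_sq_le_sq ?_ (by positivity)
  rw [mul_pow, mul_pow, Real.sq_sqrt (hB x), Real.sq_sqrt (hB y)]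
  linarith

theorem sqrt_apply_add_self_le (hB : ∀ x, 0 ≤ B x x) (x y : M) :
    √(B (x + y) (x + y)) ≤ √(B x x) + √(B y y) := by
  refine Real.sqrt_le_iff.2 ⟨by positivity, ?_⟩
  calc B (x + y) (x + y) = B x x + (B x y + B y x) + B y y := by
        simp only [map_add, LinearMap.add_apply]
        ring
    _ ≤ B x x + 2 * (√(B x x) * √(B y y)) + B y y := by
        gcongr
        exact apply_add_apply_swap_le_two_mul_sqrt hB x y
    _ = (√(B x x) + √(B y y)) ^ 2 := by
        rw [add_sq, Real.sq_sqrt (hB x), Real.sq_sqrt (hB y), mul_assoc]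

end PositiveForm

section BoundedForm

variable {E : Type*} [NormedAddCommGroup E] [NormedSpace ℝ E] {B : E →L[ℝ] E →L[ℝ] ℝ}

theorem apply_self_le_opNorm_mul_norm_sq (B : E →L[ℝ] E →L[ℝ] ℝ) (x : E) :
    B x x ≤ ‖B‖ * ‖x‖ ^ 2 :=
  calc B x x ≤ ‖B x x‖ := Real.le_norm_self _
    _ ≤ ‖B‖ * ‖x‖ * ‖x‖ := B.le_opNorm₂ x x
    _ = ‖B‖ * ‖x‖ ^ 2 := by ring

theorem lipschitzWith_sqrt_apply_self (hB : ∀ x, 0 ≤ B x x) :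
    LipschitzWith (NNReal.sqrt ‖B‖₊) fun x ↦ √(B x x) := by
  refine LipschitzWith.of_le_add_mul _ fun x y ↦ ?_
  calc √(B x x) = √(B (y + (x - y)) (y + (x - y))) := by rw [add_sub_cancel]
    _ ≤ √(B y y) + √(B (x - y) (x - y)) :=
        sqrt_apply_add_self_le (B := B.toBilinForm) hB y (x - y)
    _ ≤ √(B y y) + √(‖B‖ * ‖x - y‖ ^ 2) := by
        gcongr
        exact apply_self_le_opNorm_mul_norm_sq B (x - y)
    _ = √(B y y) + NNReal.sqrt ‖B‖₊ * dist x y := by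
        rw [Real.sqrt_mul (norm_nonneg B), Real.sqrt_sq (norm_nonneg _), dist_eq_norm,
          Real.coe_sqrt, coe_nnnorm]

theorem exists_pos_mul_apply_self_le_norm_sq (B : E →L[ℝ] E →L[ℝ] ℝ) :
    ∃ r > 0, ∀ x, r * B x x ≤ ‖x‖ ^ 2 := by
  refine ⟨(‖B‖ + 1)⁻¹, by positivity, fun x ↦ ?_⟩
  rw [inv_mul_le_iff₀ (by positivity)]
  calc B x x ≤ ‖B‖ * ‖x‖ ^ 2 := apply_self_le_opNorm_mul_norm_sq B x
    _ ≤ (‖B‖ + 1) * ‖x‖ ^ 2 := by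
        gcongr
        exact le_add_of_nonneg_right zero_le_one

theorem isCoercive_of_forall_pos [FiniteDimensional ℝ E] (hB : ∀ x ≠ 0, 0 < B x x) :
    IsCoercive B := by
  obtain ⟨C, hC, hmin⟩ := (isCompact_sphere (0 : E) 1).exists_forall_le'
    (f := fun x ↦ B x x) (by fun_prop) fun x hx ↦ hB x (ne_zero_of_mem_unit_sphere ⟨x, hx⟩)
  refine ⟨C, hC, fun x ↦ ?_⟩
  obtain rfl | hx := eq_or_ne x 0
  · simp
  · have hunit := hmin (‖x‖⁻¹ • x) (by simp [norm_smul, hx])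
    simp only [map_smul, smul_apply, smul_eq_mul] at hunit
    have hx0 : 0 < ‖x‖ := norm_pos_iff.2 hx
    rwa [← mul_assoc, ← mul_inv, inv_mul_eq_div, le_div_iff₀ (by positivity), ← mul_assoc] at hunit

theorem exists_pos_mul_norm_le_sqrt_apply_self (hB : IsCoercive B) :
    ∃ c > 0, ∀ x, c * ‖x‖ ≤ √(B x x) := by
  obtain ⟨C, hC, hle⟩ := hB
  refine ⟨√C, Real.sqrt_pos.2 hC, fun x ↦ Real.le_sqrt_of_sq_le ?_⟩
  rw [mul_pow, Real.sq_sqrt hC.le, sq ‖x‖, ← mul_assoc]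
  exact hle x

theorem sqrt_apply_self_le_exp_mul_of_hasDerivAt {f : E → E} {r : ℝ}
    (hf : ∀ x, B x (f x) + B (f x) x ≤ -r * B x x) {χ : ℝ → E} {s T : ℝ} (hT : 0 ≤ T)
    (hχ : ∀ t ∈ Set.Icc s (s + T), HasDerivAt χ (f (χ t)) t) :
    √(B (χ (s + T)) (χ (s + T))) ≤ Real.exp (-(r / 2 * T)) * √(B (χ s) (χ s)) :=
  sqrt_le_exp_mul_sqrt_of_hasDerivAt (q := fun t ↦ B (χ t) (χ t)) hT
    (fun t ht ↦ B.hasDerivAt_of_bilinear (fun _ ↦ hχ t ht) fun _ ↦ hχ t ht)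
    fun t _ ↦ hf (χ t)

theorem A2_for_linear_Hurwitz_system_general (hB : IsCoercive B) {f : E → E}
    (hf : ∀ x, B x (f x) + B (f x) x ≤ -‖x‖ ^ 2) :
    ∃ k > 0, (∃ K : NNReal, LipschitzWith K fun x ↦ k * √(B x x)) ∧
      ∀ χ : ℝ → E, ∀ s T : ℝ, 0 ≤ T → T ≤ 1 →
        (∀ t ∈ Set.Icc s (s + T), HasDerivAt χ (f (χ t)) t) →
          k * √(B (χ (s + T)) (χ (s + T))) - k * √(B (χ s) (χ s)) ≤ -T * ‖χ s‖ := by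
  obtain ⟨c, hc, hlower⟩ := exists_pos_mul_norm_le_sqrt_apply_self hB
  obtain ⟨r, hr, hupper⟩ := exists_pos_mul_apply_self_le_norm_sq B
  have hnonneg (x : E) : 0 ≤ B x x := by
    obtain ⟨C, hC, hle⟩ := hB
    exact (by positivity : 0 ≤ C * ‖x‖ * ‖x‖).trans (hle x)
  have hdecay (x : E) : B x (f x) + B (f x) x ≤ -r * B x x := by
    linarith [hf x, hupper x]
  have hgap : 0 < 1 - Real.exp (-(r / 2)) := sub_pos.2 (Real.exp_lt_one_iff.2 (by linarith))
  refine ⟨(c * (1 - Real.exp (-(r / 2))))⁻¹, by positivity,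
    ⟨_, (lipschitzWith_smul (c * (1 - Real.exp (-(r / 2))))⁻¹).comp
      (lipschitzWith_sqrt_apply_self hnonneg)⟩,
    fun χ s T hT hT1 hχ ↦ ?_⟩
  rw [← mul_sub, inv_mul_le_iff₀ (by positivity)]
  have hdrop : T * (1 - Real.exp (-(r / 2))) * (c * ‖χ s‖)
      ≤ (1 - Real.exp (-(r / 2 * T))) * √(B (χ s) (χ s)) := by
    gcongr
    · exact sub_nonneg.2 (Real.exp_le_one_iff.2 (neg_nonpos.2 (by positivity)))
    · exact mul_one_sub_exp_neg_le hT hT1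
    · exact hlower (χ s)
  linarith [sqrt_apply_self_le_exp_mul_of_hasDerivAt hdecay hT hχ]

end BoundedForm

section MatrixForm

variable {ι : Type*} [Fintype ι] [DecidableEq ι]

/-- The bilinear form `(x, y) ↦ xᵀ P y` of a real matrix `P`, as a bounded form for the Euclidean
norm. -/
noncomputable def euclideanForm (P : Matrix ι ι ℝ) :
    EuclideanSpace ℝ ι →L[ℝ] EuclideanSpace ℝ ι →L[ℝ] ℝ :=
  (Matrix.toBilin (EuclideanSpace.basisFun ι ℝ).toBasis P).toContinuousBilinearMap

theorem euclideanForm_apply (P : Matrix ι ι ℝ) (x y : EuclideanSpace ℝ ι) :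
    euclideanForm P x y = ∑ i, ∑ j, x i * P i j * y j :=
  Matrix.toBilin_apply _ P x y

theorem euclideanForm_eq_dotProduct (P : Matrix ι ι ℝ) (x y : EuclideanSpace ℝ ι) :
    euclideanForm P x y = x.ofLp ⬝ᵥ P.mulVec y.ofLp := by
  simp only [euclideanForm_apply, dotProduct, Matrix.mulVec, Finset.mul_sum, mul_assoc]

theorem isCoercive_euclideanForm {P : Matrix ι ι ℝ} (hP : P.PosDef) :
    IsCoercive (euclideanForm P) :=
  isCoercive_of_forall_pos fun x hx ↦ by
    rw [euclideanForm_eq_dotProduct]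
    exact hP.dotProduct_mulVec_pos (by simpa using hx)

theorem euclideanForm_toEuclideanLin_add (P A : Matrix ι ι ℝ) (x y : EuclideanSpace ℝ ι) :
    euclideanForm P x (A.toEuclideanLin y) + euclideanForm P (A.toEuclideanLin x) y =
      euclideanForm (P * A + A.transpose * P) x y := by
  simp only [euclideanForm_eq_dotProduct, Matrix.ofLp_toLpLin, Matrix.toLin'_apply,
    Matrix.add_mulVec, dotProduct_add, ← Matrix.mulVec_mulVec,
    Matrix.dotProduct_mulVec x.ofLp A.transpose, Matrix.vecMul_transpose]

theorem euclideanForm_neg_one_apply_self (x : EuclideanSpace ℝ ι) :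
    euclideanForm (-1) x x = -‖x‖ ^ 2 := by
  rw [euclideanForm_eq_dotProduct, Matrix.neg_mulVec, Matrix.one_mulVec, dotProduct_neg,
    EuclideanSpace.real_norm_sq_eq, dotProduct]
  simp only [sq]

end MatrixForm

/-- Verification of Assumption (A2) for a linear Hurwitz system: if `A` is Hurwitz and
`P` is symmetric positive definite with `PA + AᵀP = -I`, then for suitable `k, c₀ > 0`
the function `V(x) = k √(xᵀPx)` is Lipschitz and satisfies the drift condition
`V(χ(s+T)) - V(χ(s)) ≤ -T‖χ(s)‖` along solutions of `dχ/dt = Aχ` whenever `‖χ(s)‖ > c₀`,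
`s ≥ 0`, `0 ≤ T ≤ 1`. -/
theorem A2_for_linear_Hurwitz_system
    (d : ℕ) (A : Matrix (Fin d) (Fin d) ℝ)
    (hHurwitz : ∀ μ ∈ spectrum ℂ (A.map (Complex.ofReal : ℝ → ℂ)), μ.re < 0)
    (P : Matrix (Fin d) (Fin d) ℝ) (hP_symm : P.IsSymm) (hP_pos : P.PosDef)
    (hLyap : P * A + A.transpose * P = -1) :
    ∃ k c₀ : ℝ, 0 < k ∧ 0 < c₀ ∧
      (∃ K : NNReal, LipschitzWith K
        (fun x : EuclideanSpace ℝ (Fin d) => k * Real.sqrt (∑ i, ∑ j, x i * P i j * x j))) ∧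
      ∀ χ : ℝ → EuclideanSpace ℝ (Fin d),
        (∀ t : ℝ, 0 ≤ t → HasDerivAt χ (Matrix.toEuclideanLin A (χ t)) t) →
        ∀ s : ℝ, 0 ≤ s → ∀ T : ℝ, 0 ≤ T → T ≤ 1 → c₀ < ‖χ s‖ →
          k * Real.sqrt (∑ i, ∑ j, χ (s + T) i * P i j * χ (s + T) j)
            - k * Real.sqrt (∑ i, ∑ j, χ s i * P i j * χ s j)
          ≤ -T * ‖χ s‖ := by
  obtain ⟨k, hk, hLip, hdrift⟩ := A2_for_linear_Hurwitz_system_general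
    (isCoercive_euclideanForm hP_pos) (f := Matrix.toEuclideanLin A) fun x ↦ by
      rw [euclideanForm_toEuclideanLin_add, hLyap, euclideanForm_neg_one_apply_self]
  simp only [euclideanForm_apply] at hLip hdrift
  exact ⟨k, 1, hk, one_pos, hLip, fun χ hχ s hs T hT hT1 _ ↦
    hdrift χ s T hT hT1 fun t ht ↦ hχ t (hs.trans ht.1)⟩
end
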